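/- Let d ≥ 1, k > 0, ε > 0, let ν : ℝ × ℝ^d → ℝ be continuous, and let a, b : ℝ × ℝ^d → ℂ (written a(z,x), b(z,x)) be smooth, with a(z,·) and b(z,·) Schwartz functions of x for each z, all Schwartz seminorms of a(z,·), b(z,·), ∂_z a(z,·), ∂_z b(z,·) being locally bounded in z. Suppose a and b satisfy the coupled paraxial mode equations ∂_z a = 𝒫a + e^{−2ikz/ε⁴} 𝒫b and ∂_z b = −e^{2ikz/ε⁴} 𝒫a − 𝒫b, where 𝒫u(z,x) = (ik/(2ε)) ν(z/ε², x) u(z,x) + (i/(2k)) Δ_x u(z,x). Then the function z ↦ ∫_{ℝ^d} (|a(z,x)|² − |b(z,x)|²) dx is constant. -/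

import Mathlib

open MeasureTheory SchwartzMap

/-- Transverse Laplacian `Δ_x u = ∑ i ∂²u/∂x_i²` of a function on `ℝ^d`. -/
noncomputable def lapl {d : ℕ} (u : EuclideanSpace ℝ (Fin d) → ℂ)
    (x : EuclideanSpace ℝ (Fin d)) : ℂ :=
  ∑ i : Fin d,
    fderiv ℝ (fun y => fderiv ℝ u y (EuclideanSpace.single i (1 : ℝ))) x
      (EuclideanSpace.single i (1 : ℝ))

/-- The paraxial operator `𝒫u(z,x) = (ik/(2ε)) ν(z/ε²,x) u(z,x) + (i/(2k)) Δ_x u(z,x)`. -/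
noncomputable def paraxOp {d : ℕ} (k ε : ℝ) (ν : ℝ → EuclideanSpace ℝ (Fin d) → ℝ)
    (u : ℝ → EuclideanSpace ℝ (Fin d) → ℂ) (z : ℝ) (x : EuclideanSpace ℝ (Fin d)) : ℂ :=
  (Complex.I * k / (2 * ε)) * (ν (z / ε ^ 2) x : ℝ) * u z x
    + (Complex.I / (2 * k)) * lapl (u z) x

/-- A family of Schwartz functions, indexed by `z`, has locally bounded Schwartz seminorms. -/
def LocBddSeminorms {d : ℕ} (f : ℝ → 𝓢(EuclideanSpace ℝ (Fin d), ℂ)) : Prop :=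
  ∀ (i j : ℕ) (z₀ : ℝ), ∃ δ > (0 : ℝ), ∃ M : ℝ,
    ∀ z : ℝ, |z - z₀| ≤ δ → SchwartzMap.seminorm ℝ i j (f z) ≤ M

open Complex Filter InnerProductSpace Laplacian Topology

/-!
The paraxial operator `𝒫 = i (V + κ Δ)`, with `V` and `κ` real, is skew-symmetric for the real inner
product of `L²`. With the unimodular phase `θ = e^{−2ikz/ε⁴}` and `c = a + θ b`, the system reads
`∂_z a = 𝒫 c`, `∂_z b = −θ⁻¹ 𝒫 c`, and multiplication by `θ` is an isometry, so
`∂_z (‖a‖² − ‖b‖²) = 2 ⟪a, 𝒫 c⟫ + 2 ⟪θ b, 𝒫 c⟫ = 2 ⟪c, 𝒫 c⟫`, whose integral vanishes.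
-/

/-- Rapid decay in `x`, locally uniform in the parameter: along `l`, every weighted sup-norm
`sup ‖x‖ ^ n ‖f t x‖` is eventually bounded. It dominates the energy density and its derivative
when differentiating under the integral sign. -/
def UniformRapidDecay {ι E F : Type*} [NormedAddCommGroup E] [NormedAddCommGroup F]
    (l : Filter ι) (f : ι → E → F) : Prop :=
  ∀ n : ℕ, ∃ C : ℝ, ∀ᶠ t in l, ∀ x, ‖x‖ ^ n * ‖f t x‖ ≤ C

lemma LocBddSeminorms.uniformRapidDecay {d : ℕ} {f : ℝ → 𝓢(EuclideanSpace ℝ (Fin d), ℂ)}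
    (hf : LocBddSeminorms f) (z : ℝ) : UniformRapidDecay (𝓝 z) fun w x => f w x := by
  intro n
  obtain ⟨δ, hδ, C, hC⟩ := hf n 0 z
  refine ⟨C, ?_⟩
  filter_upwards [Metric.closedBall_mem_nhds z hδ] with w hw x
  exact (norm_pow_mul_le_seminorm ℝ (f w) n x).trans (hC w hw)

section EnergyDerivative

variable {E F : Type*} [NormedAddCommGroup E] [NormedAddCommGroup F] [InnerProductSpace ℝ F]

lemma UniformRapidDecay.exists_norm_inner_le {ι : Type*} {l : Filter ι} {f g : ι → E → F}
    (hf : UniformRapidDecay l f) (hg : UniformRapidDecay l g) (n : ℕ) :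
    ∃ C : ℝ, ∀ᶠ t in l, ∀ x, ‖⟪f t x, g t x⟫_ℝ‖ ≤ C * (1 + ‖x‖) ^ (-(n : ℝ)) := by
  obtain ⟨M, hM⟩ := hf 0
  obtain ⟨C₀, hC₀⟩ := hg 0
  obtain ⟨C, hC⟩ := hg n
  refine ⟨M * (2 ^ n * (C₀ + C)), ?_⟩
  filter_upwards [hM, hC₀, hC] with t hMt hC₀t hCt x
  have hf_le : ‖f t x‖ ≤ M := by simpa using hMt x
  have hg_le : ‖g t x‖ ≤ 2 ^ n * (C₀ + C) * (1 + ‖x‖) ^ (-(n : ℝ)) := by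
    simpa using pow_mul_le_of_le_of_pow_mul_le (k := 0) (norm_nonneg x) (norm_nonneg (g t x))
      (by simpa using hC₀t x) (by simpa using hCt x)
  calc ‖⟪f t x, g t x⟫_ℝ‖ ≤ ‖f t x‖ * ‖g t x‖ := norm_inner_le_norm _ _
    _ ≤ M * (2 ^ n * (C₀ + C) * (1 + ‖x‖) ^ (-(n : ℝ))) :=
      mul_le_mul hf_le hg_le (norm_nonneg _) ((norm_nonneg _).trans hf_le)
    _ = _ := by ring

variable [NormedSpace ℝ E] [MeasurableSpace E] [BorelSpace E] [SecondCountableTopology E]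
  {μ : Measure E} [μ.HasTemperateGrowth]

lemma integrable_inner_schwartz (f g : 𝓢(E, F)) : Integrable (fun x => ⟪f x, g x⟫_ℝ) μ :=
  (pairing (innerSL ℝ) f g).integrable

lemma integrable_norm_sq_schwartz (f : 𝓢(E, F)) : Integrable (fun x => ‖f x‖ ^ 2) μ := by
  simpa only [real_inner_self_eq_norm_sq] using integrable_inner_schwartz f f

lemma hasDerivAt_integral_norm_sq {f f' : ℝ → 𝓢(E, F)} {z : ℝ}
    (hderiv : ∀ᶠ w in 𝓝 z, ∀ x, HasDerivAt (fun t => f t x) (f' w x) w)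
    (hf : UniformRapidDecay (𝓝 z) fun w x => f w x)
    (hf' : UniformRapidDecay (𝓝 z) fun w x => f' w x) :
    HasDerivAt (fun w => ∫ x, ‖f w x‖ ^ 2 ∂μ) (2 * ∫ x, ⟪f z x, f' z x⟫_ℝ ∂μ) z := by
  obtain ⟨C, hC⟩ := hf.exists_norm_inner_le hf' μ.integrablePower
  rw [← integral_const_mul]
  refine (hasDerivAt_integral_of_dominated_loc_of_deriv_le (hC.and hderiv)
    (.of_forall fun w => (integrable_norm_sq_schwartz (f w)).aestronglyMeasurable)
    (integrable_norm_sq_schwartz (f z))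
    (F' := fun w x => 2 * ⟪f w x, f' w x⟫_ℝ)
    (bound := fun x => 2 * (C * (1 + ‖x‖) ^ (-(μ.integrablePower : ℝ))))
    ((integrable_inner_schwartz (f z) (f' z)).const_mul 2).aestronglyMeasurable
    (ae_of_all _ fun x w hw => ?_)
    (((Measure.integrable_pow_neg_integrablePower μ).const_mul C).const_mul 2)
    (ae_of_all _ fun x w hw => (hw.2 x).norm_sq)).2
  rw [norm_mul, Real.norm_two]
  exact mul_le_mul_of_nonneg_left (hw.1 x) zero_le_two

end EnergyDerivative

section CoupledModes

lemma inner_circle_inv_mul (θ : Circle) (v w : ℂ) :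
    ⟪v, (θ : ℂ)⁻¹ * w⟫_ℝ = ⟪θ * v, w⟫_ℝ := by
  simp only [← Circle.coe_inv, Circle.coe_inv_eq_conj, Complex.inner, map_mul]
  ring_nf

lemma inner_sub_inner_coupled (θ : Circle) (u v p q : ℂ) :
    ⟪u, p + θ * q⟫_ℝ - ⟪v, -(θ : ℂ)⁻¹ * p - q⟫_ℝ = ⟪u + θ * v, p + θ * q⟫_ℝ := by
  have hvec : -(θ : ℂ)⁻¹ * p - q = -((θ : ℂ)⁻¹ * (p + θ * q)) := by
    field_simp [θ.coe_ne_zero]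
    ring
  rw [hvec, inner_neg_right, inner_circle_inv_mul, sub_neg_eq_add, inner_add_left]

variable {E : Type*} [NormedAddCommGroup E] [NormedSpace ℝ E] [MeasurableSpace E]
  [BorelSpace E] [SecondCountableTopology E] {μ : Measure E} [μ.HasTemperateGrowth]

theorem integral_norm_sq_sub_norm_sq_eq_of_coupled_skew
    {A : ℝ → 𝓢(E, ℂ) →ₗ[ℂ] E → ℂ} (hA : ∀ z f, ∫ x, ⟪f x, A z f x⟫_ℝ ∂μ = 0)
    (θ : ℝ → Circle) {a b a' b' : ℝ → 𝓢(E, ℂ)}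
    (hderiva : ∀ z x, HasDerivAt (fun w => a w x) (a' z x) z)
    (hderivb : ∀ z x, HasDerivAt (fun w => b w x) (b' z x) z)
    (ha : ∀ z, UniformRapidDecay (𝓝 z) fun w x => a w x)
    (hb : ∀ z, UniformRapidDecay (𝓝 z) fun w x => b w x)
    (ha' : ∀ z, UniformRapidDecay (𝓝 z) fun w x => a' w x)
    (hb' : ∀ z, UniformRapidDecay (𝓝 z) fun w x => b' w x)
    (heqa : ∀ z x, a' z x = A z (a z) x + θ z * A z (b z) x)
    (heqb : ∀ z x, b' z x = -(θ z : ℂ)⁻¹ * A z (a z) x - A z (b z) x) (z₁ z₂ : ℝ) :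
    ∫ x, (‖a z₁ x‖ ^ 2 - ‖b z₁ x‖ ^ 2) ∂μ = ∫ x, (‖a z₂ x‖ ^ 2 - ‖b z₂ x‖ ^ 2) ∂μ := by
  have hflux (z : ℝ) : ∫ x, ⟪a z x, a' z x⟫_ℝ ∂μ - ∫ x, ⟪b z x, b' z x⟫_ℝ ∂μ = 0 := by
    calc _ = ∫ x, (⟪a z x, a' z x⟫_ℝ - ⟪b z x, b' z x⟫_ℝ) ∂μ :=
        (integral_sub (integrable_inner_schwartz _ _) (integrable_inner_schwartz _ _)).symm
      _ = ∫ x, ⟪(a z + (θ z : ℂ) • b z) x, A z (a z + (θ z : ℂ) • b z) x⟫_ℝ ∂μ := by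
        congr! 2 with x
        rw [heqa, heqb, inner_sub_inner_coupled, map_add, map_smul]
        rfl
      _ = 0 := hA z _
  have hderiv (z : ℝ) :
      HasDerivAt (fun w => ∫ x, ‖a w x‖ ^ 2 ∂μ - ∫ x, ‖b w x‖ ^ 2 ∂μ) 0 z := by
    have hsub := (hasDerivAt_integral_norm_sq (μ := μ) (.of_forall hderiva) (ha z) (ha' z)).fun_sub
      (hasDerivAt_integral_norm_sq (μ := μ) (.of_forall hderivb) (hb z) (hb' z))
    rwa [← mul_sub, hflux, mul_zero] at hsub
  simp only [integral_sub (integrable_norm_sq_schwartz _) (integrable_norm_sq_schwartz _)]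
  exact is_const_of_deriv_eq_zero (fun z => (hderiv z).differentiableAt)
    (fun z => (hderiv z).deriv) z₁ z₂

end CoupledModes

section Schrodinger

variable {E : Type*} [NormedAddCommGroup E] [InnerProductSpace ℝ E] [FiniteDimensional ℝ E]

/-- The generator `i (V + κ Δ)` of a Schrödinger evolution with real potential `V` and real
diffraction coefficient `κ`. Its values are plain functions because multiplication by an
arbitrary `V` does not preserve the Schwartz space. -/
noncomputable def schrodingerGenerator (V : E → ℝ) (κ : ℝ) : 𝓢(E, ℂ) →ₗ[ℂ] E → ℂ where
  toFun f x := I * (V x * f x + κ * Δ f x)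
  map_add' f g := by
    ext x
    simp only [← laplacianCLM_eq ℂ, map_add, add_apply, Pi.add_apply]
    ring
  map_smul' c f := by
    ext x
    simp only [← laplacianCLM_eq ℂ, map_smul, smul_apply, Pi.smul_apply, smul_eq_mul,
      RingHom.id_apply]
    ring

lemma schrodingerGenerator_apply (V : E → ℝ) (κ : ℝ) (f : 𝓢(E, ℂ)) (x : E) :
    schrodingerGenerator V κ f x = I * (V x * f x + κ * Δ f x) := rfl

/-- The real symplectic form `⟪u, i v⟫_ℝ` on `ℂ`, which turns skewness of `i Δ` into
antisymmetry of a continuous bilinear form. -/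
noncomputable def symplecticForm : ℂ →L[ℝ] ℂ →L[ℝ] ℝ :=
  (innerSL ℝ).bilinearComp (.id ℝ ℂ) (.mul ℝ ℂ I)

lemma symplecticForm_apply (u v : ℂ) : symplecticForm u v = ⟪u, I * v⟫_ℝ := rfl

lemma symplecticForm_antisymm (u v : ℂ) : symplecticForm u v = -symplecticForm v u := by
  simp [symplecticForm_apply]
  ring

lemma inner_schrodingerGenerator (V : E → ℝ) (κ : ℝ) (f : 𝓢(E, ℂ)) (x : E) :
    ⟪f x, schrodingerGenerator V κ f x⟫_ℝ = κ * symplecticForm (f x) (Δ f x) := by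
  have hself : symplecticForm (f x) (f x) = 0 := self_eq_neg.mp (symplecticForm_antisymm _ _)
  rw [schrodingerGenerator_apply, ← symplecticForm_apply, ← real_smul, ← real_smul, map_add,
    map_smul, map_smul, hself, smul_zero, zero_add, smul_eq_mul]

variable [MeasurableSpace E] [BorelSpace E] {μ : Measure E} [μ.IsAddHaarMeasure]

lemma integral_bilinear_laplacian_self_eq_zero {F G : Type*} [NormedAddCommGroup F]
    [NormedSpace ℝ F] [NormedAddCommGroup G] [NormedSpace ℝ G] {B : F →L[ℝ] F →L[ℝ] G}
    (hB : ∀ u v, B u v = -B v u) (f : 𝓢(E, F)) : ∫ x, B (f x) (Δ f x) ∂μ = 0 := by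
  have : IsAddTorsionFree G := .of_isTorsionFree ℝ G
  refine self_eq_neg.mp ?_
  calc ∫ x, B (f x) (Δ f x) ∂μ = ∫ x, B (Δ f x) (f x) ∂μ :=
        integral_bilinear_laplacian_right_eq_left f f B
    _ = -∫ x, B (f x) (Δ f x) ∂μ := by
        rw [← integral_neg]
        exact integral_congr_ae (ae_of_all _ fun x => hB _ _)

lemma integral_inner_schrodingerGenerator (V : E → ℝ) (κ : ℝ) (f : 𝓢(E, ℂ)) :
    ∫ x, ⟪f x, schrodingerGenerator V κ f x⟫_ℝ ∂μ = 0 := by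
  simp only [inner_schrodingerGenerator, integral_const_mul,
    integral_bilinear_laplacian_self_eq_zero symplecticForm_antisymm, mul_zero]

theorem energy_flux_conservation_general (V : ℝ → E → ℝ) (κ : ℝ → ℝ) (θ : ℝ → Circle)
    {a b a' b' : ℝ → 𝓢(E, ℂ)}
    (hderiva : ∀ z x, HasDerivAt (fun w => a w x) (a' z x) z)
    (hderivb : ∀ z x, HasDerivAt (fun w => b w x) (b' z x) z)
    (ha : ∀ z, UniformRapidDecay (𝓝 z) fun w x => a w x)
    (hb : ∀ z, UniformRapidDecay (𝓝 z) fun w x => b w x)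
    (ha' : ∀ z, UniformRapidDecay (𝓝 z) fun w x => a' w x)
    (hb' : ∀ z, UniformRapidDecay (𝓝 z) fun w x => b' w x)
    (heqa : ∀ z x, a' z x = schrodingerGenerator (V z) (κ z) (a z) x
      + θ z * schrodingerGenerator (V z) (κ z) (b z) x)
    (heqb : ∀ z x, b' z x = -(θ z : ℂ)⁻¹ * schrodingerGenerator (V z) (κ z) (a z) x
      - schrodingerGenerator (V z) (κ z) (b z) x) (z₁ z₂ : ℝ) :
    ∫ x, (‖a z₁ x‖ ^ 2 - ‖b z₁ x‖ ^ 2) ∂μ = ∫ x, (‖a z₂ x‖ ^ 2 - ‖b z₂ x‖ ^ 2) ∂μ :=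
  integral_norm_sq_sub_norm_sq_eq_of_coupled_skew
    (fun z => integral_inner_schrodingerGenerator (V z) (κ z)) θ
    hderiva hderivb ha hb ha' hb' heqa heqb z₁ z₂

end Schrodinger

section Paraxial

variable {d : ℕ}

lemma lapl_schwartz_eq_laplacian (f : 𝓢(EuclideanSpace ℝ (Fin d), ℂ))
    (x : EuclideanSpace ℝ (Fin d)) : lapl f x = Δ f x := by
  rw [laplacian_eq_sum (EuclideanSpace.basisFun (Fin d) ℝ), sum_apply]
  simp only [EuclideanSpace.basisFun_apply]
  rfl

lemma paraxOp_eq_schrodingerGenerator (k ε : ℝ) (ν : ℝ → EuclideanSpace ℝ (Fin d) → ℝ)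
    (u : ℝ → 𝓢(EuclideanSpace ℝ (Fin d), ℂ)) (z : ℝ) (x : EuclideanSpace ℝ (Fin d)) :
    paraxOp k ε ν (fun w y => u w y) z x =
      schrodingerGenerator (fun y => k / (2 * ε) * ν (z / ε ^ 2) y) (1 / (2 * k)) (u z) x := by
  rw [paraxOp, schrodingerGenerator_apply, ← lapl_schwartz_eq_laplacian]
  push_cast
  ring

/-- The phase `e^{−2ikz/ε⁴}` by which the two counter-propagating modes are coupled. -/
noncomputable def couplingPhase (k ε z : ℝ) : Circle := Circle.exp (-2 * k * z / ε ^ 4)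

lemma coe_couplingPhase (k ε z : ℝ) :
    (couplingPhase k ε z : ℂ) = exp (-2 * I * k * z / ε ^ 4) := by
  rw [couplingPhase, Circle.coe_exp]
  push_cast
  ring_nf

lemma coe_couplingPhase_inv (k ε z : ℝ) :
    (couplingPhase k ε z : ℂ)⁻¹ = exp (2 * I * k * z / ε ^ 4) := by
  rw [coe_couplingPhase, ← Complex.exp_neg]
  ring_nf

end Paraxial

/-- conservation of the net energy flux, Step 1 of Proposition 3.1.
If `a, b` are smooth solutions of the coupled paraxial mode equations
`∂_z a = 𝒫a + e^{−2ikz/ε⁴} 𝒫b`, `∂_z b = −e^{2ikz/ε⁴} 𝒫a − 𝒫b`, Schwartz in `x` for each `z`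
with locally bounded seminorms (also for their `z`-derivatives `a', b'`), then
`z ↦ ∫ (|a(z,x)|² − |b(z,x)|²) dx` is constant. -/
theorem energy_flux_conservation (d : ℕ) (hd : 1 ≤ d) (k ε : ℝ) (hk : 0 < k) (hε : 0 < ε)
    (ν : ℝ → EuclideanSpace ℝ (Fin d) → ℝ)
    (hν : Continuous fun q : ℝ × EuclideanSpace ℝ (Fin d) => ν q.1 q.2)
    (a b a' b' : ℝ → 𝓢(EuclideanSpace ℝ (Fin d), ℂ))
    (hderiva : ∀ z x, HasDerivAt (fun z' => a z' x) (a' z x) z)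
    (hderivb : ∀ z x, HasDerivAt (fun z' => b z' x) (b' z x) z)
    (hba : LocBddSeminorms a) (hbb : LocBddSeminorms b)
    (hba' : LocBddSeminorms a') (hbb' : LocBddSeminorms b')
    (heqa : ∀ z x,
      a' z x = paraxOp k ε ν (fun z' x' => a z' x') z x
        + Complex.exp (-2 * Complex.I * k * z / ε ^ 4) *
            paraxOp k ε ν (fun z' x' => b z' x') z x)
    (heqb : ∀ z x,
      b' z x = -Complex.exp (2 * Complex.I * k * z / ε ^ 4) *
            paraxOp k ε ν (fun z' x' => a z' x') z x
        - paraxOp k ε ν (fun z' x' => b z' x') z x) :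
    ∀ z₁ z₂ : ℝ,
      (∫ x : EuclideanSpace ℝ (Fin d), (‖a z₁ x‖ ^ 2 - ‖b z₁ x‖ ^ 2)) =
        ∫ x : EuclideanSpace ℝ (Fin d), (‖a z₂ x‖ ^ 2 - ‖b z₂ x‖ ^ 2) := by
  simp only [paraxOp_eq_schrodingerGenerator, ← coe_couplingPhase, ← coe_couplingPhase_inv]
    at heqa heqb
  exact energy_flux_conservation_general _ _ _ hderiva hderivb hba.uniformRapidDecay
    hbb.uniformRapidDecay hba'.uniformRapidDecay hbb'.uniformRapidDecay heqa heqb
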